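/- arXiv:2402.09185 — 3 statements merged into one kernel-verified Lean document; each statement's English description precedes it below -/
import Mathlib

section
/- A relation X ⊆ ℕ^{d'} × ℕ^{d''} is a PVASS section if and only if X = Rel(E) for some expression E of type E_{d',d''} over VASS sections. -/
/-- Vectors of naturals of dimension `d`. -/
abbrev NVec (d : ℕ) := Fin d → ℕ

/-- A priority vector addition system with states (PVASS) of dimension `d`:
a finite set of states `Q`, a finite set of edges `E`, each edge having a source,
a target, an update vector in `ℤ^d` and a test level `g(e) ∈ {0,…,d}`. -/
structure PVASS (d : ℕ) where
  Q : Type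
  E : Type
  fintypeQ : Fintype Q
  fintypeE : Fintype E
  src : E → Q
  tgt : E → Q
  upd : E → Fin d → ℤ
  test : E → ℕ
  test_le : ∀ e, test e ≤ d

namespace PVASS

variable {d : ℕ} (V : PVASS d)

/-- The one-step relation of a PVASS: an edge `e` can be taken from `(q,x)` to `(q',x')`
iff `q = src e`, `q' = tgt e`, the first `test e` counters of `x` are zero, and
`x' = x + upd e` (staying nonnegative, which is automatic since `x' ∈ ℕ^d`). -/
def Step (c c' : V.Q × NVec d) : Prop :=
  ∃ e : V.E, V.src e = c.1 ∧ V.tgt e = c'.1 ∧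
    (∀ j : Fin d, (j : ℕ) < V.test e → c.2 j = 0) ∧
    ∀ i : Fin d, (c'.2 i : ℤ) = (c.2 i : ℤ) + V.upd e i

/-- The reachability relation: reflexive transitive closure of the step relation. -/
def Reach : V.Q × NVec d → V.Q × NVec d → Prop := Relation.ReflTransGen V.Step

end PVASS

/-- Embed a pair `(b, x)` with `b ∈ ℕ^{d-d'}` and `x ∈ ℕ^{d'}` into `ℕ^d`:
the first `d - d'` coordinates form `b`, the last `d'` coordinates form `x`. -/
def fitVec {d d' : ℕ} (h : d' ≤ d) (b : Fin (d - d') → ℕ) (x : Fin d' → ℕ) : NVec d :=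
  fun i => Fin.append b x (Fin.cast (Nat.sub_add_cancel h).symm i)

/-- `X ⊆ ℕ^{d'} × ℕ^{d''}` is a PVASS section. -/
def IsPVASSSection {d' d'' : ℕ} (X : Set (NVec d' × NVec d'')) : Prop :=
  ∃ (d : ℕ) (h' : d' ≤ d) (h'' : d'' ≤ d) (V : PVASS d) (p q : V.Q)
    (bs : Fin (d - d') → ℕ) (bt : Fin (d - d'') → ℕ),
    X = {xy | V.Reach (p, fitVec h' bs xy.1) (q, fitVec h'' bt xy.2)}

/-- `X ⊆ ℕ^{d'} × ℕ^{d''}` is a VASS section: a section of a PVASS in which no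
counter is ever tested for zero. -/
def IsVASSSection {d' d'' : ℕ} (X : Set (NVec d' × NVec d'')) : Prop :=
  ∃ (d : ℕ) (h' : d' ≤ d) (h'' : d'' ≤ d) (V : PVASS d) (_ : ∀ e, V.test e = 0)
    (p q : V.Q) (bs : Fin (d - d') → ℕ) (bt : Fin (d - d'') → ℕ),
    X = {xy | V.Reach (p, fitVec h' bs xy.1) (q, fitVec h'' bt xy.2)}

/-- Composition of relations. -/
def RelComp {α β γ : Type*} (R : Set (α × β)) (S : Set (β × γ)) : Set (α × γ) :=
  {p | ∃ x, (p.1, x) ∈ R ∧ (x, p.2) ∈ S}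

/-- Reflexive transitive closure of a relation, viewed as a set of pairs. -/
def RelStar {α : Type*} (R : Set (α × α)) : Set (α × α) :=
  {p | Relation.ReflTransGen (fun a b => (a, b) ∈ R) p.1 p.2}

/-- Regular expressions over VASS sections: leaves are VASS sections, and we can
compose (with matching intermediate dimension), take unions (with matching dimensions),
and take Kleene star (only when input and output dimensions agree). -/
inductive Expr : ℕ → ℕ → Type 1 where
  | leaf {a b : ℕ} (Y : Set (NVec a × NVec b)) (hY : IsVASSSection Y) : Expr a b
  | comp {a m b : ℕ} : Expr a m → Expr m b → Expr a b
  | union {a b : ℕ} : Expr a b → Expr a b → Expr a b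
  | star {a : ℕ} : Expr a a → Expr a a

/-- The relation denoted by an expression. -/
def Expr.Rel : ∀ {a b : ℕ}, Expr a b → Set (NVec a × NVec b)
  | _, _, .leaf Y _ => Y
  | _, _, .comp E₁ E₂ => RelComp E₁.Rel E₂.Rel
  | _, _, .union E₁ E₂ => E₁.Rel ∪ E₂.Rel
  | _, _, .star E => RelStar E.Rel

/-!
Both sides are compared with the relations on `ℕ^d` that are rational over the effects of single
edges.

Reachability is rational: if `M p q` is the relation reached from `p` to `q` before adding an edge
from `s` to `t` with effect `R`, then afterwards it is `M p q ∪ M p s ∘ R ∘ (M t s ∘ R)* ∘ M t q`,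
as in Kleene's theorem. Conversely, an edge labelled by a rational relation can be simulated by
ordinary edges: a label `R ∘ S* ∘ T` is replaced by a detour through a fresh state that carries a
loop labelled `S`.

The dimension changes along an expression, so a relation between `ℕ^a` and `ℕ^b` is transported to
`ℕ^d` by prepending zeros; test levels are prefixes, so this turns an edge effect into an edge
effect. In the other direction, discarding the first `t` counters, checked to be zero at the end of
a VASS section, and restoring them at the start of the next one realizes a zero test.
-/

open Relation (ReflTransGen)
open scoped SetRel

/-! ### Relations -/

section Relations

variable {α α' β β' γ γ' : Type*}

theorem relStar_empty : RelStar (∅ : Set (α × α)) = SetRel.id := by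
  ext ⟨x, y⟩
  refine ⟨fun h => ?_, fun h => h ▸ ReflTransGen.refl⟩
  rcases ReflTransGen.cases_tail h with heq | ⟨_, _, hstep⟩
  · exact heq.symm
  · exact hstep.elim

theorem id_union_comp_relStar (R : Set (α × α)) : SetRel.id ∪ (R ○ RelStar R) = RelStar R := by
  ext ⟨x, y⟩
  exact (Relation.ReflTransGen.cases_head_iff (r := fun a b => (a, b) ∈ R)).symm

theorem image_prodMap_comp {f : α → α'} {g : β → β'} {h : γ → γ'} (hg : g.Injective)
    (R : Set (α × β)) (S : Set (β × γ)) :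
    Prod.map f h '' (R ○ S) = (Prod.map f g '' R) ○ (Prod.map g h '' S) := by
  ext ⟨x', z'⟩
  constructor
  · rintro ⟨⟨x, z⟩, ⟨y, hR, hS⟩, heq⟩
    cases heq
    exact ⟨g y, ⟨(x, y), hR, rfl⟩, ⟨(y, z), hS, rfl⟩⟩
  · rintro ⟨_, ⟨⟨x, y₁⟩, hR, heq₁⟩, ⟨y₂, z⟩, hS, heq₂⟩
    cases heq₁
    obtain ⟨hy, rfl⟩ := Prod.mk.inj heq₂
    cases hg hy
    exact ⟨(x, z), ⟨y₁, hR, hS⟩, rfl⟩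

-- The last factor discards the loops that the outer star has at points outside the range of `f`.
theorem image_prodMap_relStar {f : α → α'} (hf : f.Injective) (R : Set (α × α)) :
    Prod.map f f '' RelStar R =
      RelStar (Prod.map f f '' R) ○ (Prod.map f f '' SetRel.id) := by
  ext ⟨x', y'⟩
  constructor
  · rintro ⟨⟨x, y⟩, hxy, heq⟩
    cases heq
    exact ⟨f y, ReflTransGen.lift f (fun a b hab => ⟨(a, b), hab, rfl⟩) _ _ hxy, (y, y), rfl, rfl⟩
  · rintro ⟨_, hstar, ⟨y, _⟩, rfl, heq⟩
    cases heq
    suffices ∃ x, f x = x' ∧ (x, y) ∈ RelStar R by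
      obtain ⟨x, rfl, hxy⟩ := this
      exact ⟨(x, y), hxy, rfl⟩
    change ReflTransGen _ x' (f y) at hstar
    induction hstar using ReflTransGen.head_induction_on with
    | refl => exact ⟨y, rfl, ReflTransGen.refl⟩
    | head hstep _ ih =>
      obtain ⟨x₁, hx₁, hxy⟩ := ih
      obtain ⟨⟨x, x₂⟩, hR, heq⟩ := hstep
      obtain ⟨rfl, hx₂⟩ := Prod.mk.inj heq
      cases hf (hx₁.trans hx₂.symm)
      exact ⟨x, rfl, ReflTransGen.head hR hxy⟩

theorem image_prodMap_preimage_comp (f : α → α') (σ : α' → γ) (g : β → β') (τ : β' → γ')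
    (R : Set (γ × γ')) :
    Prod.map f g '' (Prod.map (σ ∘ f) (τ ∘ g) ⁻¹' R) =
      (Prod.map f f '' SetRel.id) ○
        (σ.graph ○ (R ○ (τ.graph.inv ○ (Prod.map g g '' SetRel.id)))) := by
  ext ⟨x', y'⟩
  constructor
  · rintro ⟨⟨x, y⟩, hR, heq⟩
    cases heq
    exact ⟨f x, ⟨(x, x), rfl, rfl⟩, σ (f x), rfl, τ (g y), hR, g y, rfl, (y, y), rfl, rfl⟩
  · rintro ⟨_, ⟨⟨x, _⟩, rfl, heq⟩, _, rfl, z, hR, _, hz, ⟨⟨y, _⟩, rfl, heq'⟩⟩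
    cases heq
    cases heq'
    obtain rfl : τ (g y) = z := hz
    exact ⟨(x, y), hR, rfl⟩

theorem graph_comp_image_prodMap_comp_graph_inv {f : α → α'} {g : β → β'} (hf : f.Injective)
    (hg : g.Injective) (R : Set (α × β)) :
    f.graph ○ ((Prod.map f g '' R) ○ g.graph.inv) = R := by
  ext ⟨x, y⟩
  constructor
  · rintro ⟨_, rfl, y', hR, hy⟩
    obtain rfl : g y = y' := hy
    exact (hf.prodMap hg).mem_set_image.1 hR
  · exact fun hR => ⟨f x, rfl, g y, (hf.prodMap hg).mem_set_image.2 hR, rfl⟩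

theorem reflTransGen_map_iff {r : α → α → Prop} {f : α → β} (hf : f.Injective) {b b' : β} :
    ReflTransGen (Relation.Map r f f) b b' ↔
      b = b' ∨ Relation.Map (ReflTransGen r) f f b b' := by
  constructor
  · intro h
    induction h with
    | refl => exact .inl rfl
    | tail _ hstep ih =>
      obtain ⟨a₁, a₂, hr, rfl, rfl⟩ := hstep
      rcases ih with rfl | ⟨a₀, a₁', h, rfl, heq⟩
      · exact .inr ⟨a₁, a₂, .single hr, rfl, rfl⟩
      · cases hf heq
        exact .inr ⟨a₀, a₂, h.tail hr, rfl, rfl⟩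
  · rintro (rfl | ⟨a, a', h, rfl, rfl⟩)
    · exact .refl
    · exact h.lift f fun a₁ a₂ hr => ⟨a₁, a₂, hr, rfl, rfl⟩

end Relations

/-- The rational relations over a set `B` of basic relations: the closure of `B` under the empty
relation, composition, union and reflexive transitive closure. -/
inductive IsRational {α : Type*} (B : Set (Set (α × α))) : Set (α × α) → Prop
  | of_mem {R : Set (α × α)} : R ∈ B → IsRational B R
  | empty : IsRational B ∅
  | comp {R S : Set (α × α)} : IsRational B R → IsRational B S → IsRational B (R ○ S)
  | union {R S : Set (α × α)} : IsRational B R → IsRational B S → IsRational B (R ∪ S)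
  | star {R : Set (α × α)} : IsRational B R → IsRational B (RelStar R)

namespace IsRational

variable {α β : Type*} {B : Set (Set (α × α))}

protected theorem id : IsRational B SetRel.id :=
  relStar_empty (α := α) ▸ star empty

theorem image_prodMap {C : Set (Set (β × β))} {f : α → β} (hf : f.Injective)
    (hid : IsRational C (Prod.map f f '' SetRel.id))
    (hB : ∀ R ∈ B, IsRational C (Prod.map f f '' R)) {R : Set (α × α)} (hR : IsRational B R) :
    IsRational C (Prod.map f f '' R) := by
  induction hR with
  | of_mem hR => exact hB _ hR
  | empty => exact (Set.image_empty (Prod.map f f)).symm ▸ empty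
  | comp _ _ ihR ihS => exact image_prodMap_comp hf _ _ ▸ ihR.comp ihS
  | union _ _ ihR ihS => exact Set.image_union _ _ _ ▸ ihR.union ihS
  | star _ ih => exact image_prodMap_relStar hf _ ▸ ih.star.comp hid

end IsRational

/-! ### Adding edges and states to a transition system -/

section Reachability

variable {Q Q' α ι : Type*}

/-- The relation on memory contents `α` induced by the runs from state `p` to state `q` of a
transition system `r` on `Q × α`. -/
def reachRel (r : Q × α → Q × α → Prop) (p q : Q) : Set (α × α) :=
  {xy | ReflTransGen r (p, xy.1) (q, xy.2)}

/-- The transitions contributed by a single edge from state `s` to state `t` that acts on the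
memory by the relation `R`. -/
def edgeStep (s t : Q) (R : Set (α × α)) (c c' : Q × α) : Prop :=
  c.1 = s ∧ c'.1 = t ∧ (c.2, c'.2) ∈ R

theorem edgeStep_empty (s t : Q) : edgeStep s t (∅ : Set (α × α)) = ⊥ := by
  ext c c'
  simp [edgeStep]

theorem edgeStep_union (s t : Q) (R S : Set (α × α)) :
    edgeStep s t (R ∪ S) = edgeStep s t R ⊔ edgeStep s t S := by
  ext c c'
  simp only [edgeStep, Set.mem_union, Pi.sup_apply, sup_Prop_eq]
  tauto

theorem reachRel_bot_self (p : Q) :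
    reachRel (⊥ : Q × α → Q × α → Prop) p p = SetRel.id := by
  ext ⟨x, y⟩
  refine ⟨fun h => ?_, fun h : x = y => h ▸ ReflTransGen.refl⟩
  rcases ReflTransGen.cases_tail h with heq | ⟨_, _, hstep⟩
  · exact (Prod.mk.inj heq).2.symm
  · exact hstep.elim

theorem reachRel_bot_of_ne {p q : Q} (hpq : p ≠ q) :
    reachRel (⊥ : Q × α → Q × α → Prop) p q = ∅ := by
  refine Set.eq_empty_of_forall_notMem fun _ h => ?_
  rcases ReflTransGen.cases_tail h with heq | ⟨_, _, hstep⟩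
  · exact hpq (Prod.mk.inj heq).1.symm
  · exact hstep.elim

-- Cut a run at its uses of the new edge.
theorem reachRel_sup_edgeStep (r : Q × α → Q × α → Prop) (s t : Q) (R : Set (α × α)) (p q : Q) :
    reachRel (r ⊔ edgeStep s t R) p q = reachRel r p q ∪
      (reachRel r p s ○ (R ○ (RelStar (reachRel r t s ○ R) ○ reachRel r t q))) := by
  have mono {c c' : Q × α} (h : ReflTransGen r c c') : ReflTransGen (r ⊔ edgeStep s t R) c c' :=
    ReflTransGen.mono le_sup_left _ _ h
  have edge {x y : α} (h : (x, y) ∈ R) : (r ⊔ edgeStep s t R) (s, x) (t, y) :=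
    .inr ⟨rfl, rfl, h⟩
  ext ⟨x, y⟩
  constructor
  · suffices ∀ c, ReflTransGen (r ⊔ edgeStep s t R) (p, x) c →
        (x, c.2) ∈ reachRel r p c.1 ∪
          (reachRel r p s ○ (R ○ (RelStar (reachRel r t s ○ R) ○ reachRel r t c.1))) from
      this (q, y)
    intro c h
    induction h with
    | refl => exact .inl .refl
    | @tail _ c _ hstep ih =>
      obtain ⟨_, z⟩ := c
      rcases hstep with hstep | ⟨rfl, rfl, hR⟩
      · rcases ih with ih | ⟨w, hw, v, hv, u, hu, ih⟩
        · exact .inl (ReflTransGen.tail ih hstep)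
        · exact .inr ⟨w, hw, v, hv, u, hu, ReflTransGen.tail ih hstep⟩
      · rcases ih with ih | ⟨w, hw, v, hv, u, hu, ih⟩
        · exact .inr ⟨_, ih, _, hR, _, .refl, .refl⟩
        · exact .inr ⟨w, hw, v, hv, z, ReflTransGen.tail hu ⟨_, ih, hR⟩, .refl⟩
  · rintro (h | ⟨w, hw, v, hv, u, hu, h⟩)
    · exact mono h
    · have loop : ReflTransGen (r ⊔ edgeStep s t R) (t, v) (t, u) :=
        ReflTransGen.lift' (Prod.mk t) (fun _ _ ⟨_, h₁, h₂⟩ => (mono h₁).tail (edge h₂)) _ _ hu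
      exact ((mono hw).tail (edge hv)).trans (loop.trans (mono h))

theorem reachRel_sup_edgeStep_congr {r : Q × α → Q × α → Prop} {r' : Q' × α → Q' × α → Prop}
    {i : Q → Q'} (h : ∀ p q, reachRel r' (i p) (i q) = reachRel r p q) (s t : Q)
    (R : Set (α × α)) (p q : Q) :
    reachRel (r' ⊔ edgeStep (i s) (i t) R) (i p) (i q) = reachRel (r ⊔ edgeStep s t R) p q := by
  simp only [reachRel_sup_edgeStep, h]

theorem reachRel_edgeStep_of_ne {s t : Q} (hst : s ≠ t) (R : Set (α × α)) :
    reachRel (edgeStep s t R) s t = R := by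
  rw [← bot_sup_eq (edgeStep s t R), reachRel_sup_edgeStep, reachRel_bot_of_ne hst,
    reachRel_bot_of_ne hst.symm, reachRel_bot_self, reachRel_bot_self, SetRel.empty_comp,
    relStar_empty, SetRel.id_comp, SetRel.id_comp, SetRel.comp_id, Set.empty_union]

/-- The transition system `r` with an additional isolated state `none`. -/
def addIsolated (r : Q × α → Q × α → Prop) : Option Q × α → Option Q × α → Prop :=
  Relation.Map r (Prod.map some id) (Prod.map some id)

theorem mem_reachRel_addIsolated {r : Q × α → Q × α → Prop} {p q : Option Q} {x y : α} :
    (x, y) ∈ reachRel (addIsolated r) p q ↔ (p, x) = (q, y) ∨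
      Relation.Map (ReflTransGen r) (Prod.map some id) (Prod.map some id) (p, x) (q, y) :=
  reflTransGen_map_iff ((Option.some_injective Q).prodMap Function.injective_id)

theorem reachRel_addIsolated_some_some (r : Q × α → Q × α → Prop) (p q : Q) :
    reachRel (addIsolated r) (some p) (some q) = reachRel r p q := by
  ext ⟨x, y⟩
  rw [mem_reachRel_addIsolated]
  constructor
  · rintro (heq | ⟨_, _, h, heq, heq'⟩)
    · cases heq
      exact ReflTransGen.refl
    · cases heq
      cases heq'
      exact h
  · exact fun h => .inr ⟨_, _, h, rfl, rfl⟩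

theorem reachRel_addIsolated_none_none (r : Q × α → Q × α → Prop) :
    reachRel (addIsolated r) none none = SetRel.id := by
  ext ⟨x, y⟩
  simp [mem_reachRel_addIsolated, Relation.Map]

theorem reachRel_addIsolated_some_none (r : Q × α → Q × α → Prop) (p : Q) :
    reachRel (addIsolated r) (some p) none = ∅ := by
  ext ⟨x, y⟩
  simp [mem_reachRel_addIsolated, Relation.Map]

theorem reachRel_addIsolated_none_some (r : Q × α → Q × α → Prop) (q : Q) :
    reachRel (addIsolated r) none (some q) = ∅ := by
  ext ⟨x, y⟩
  simp [mem_reachRel_addIsolated, Relation.Map]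

theorem reachRel_detour (r : Q × α → Q × α → Prop) (s t : Q) (R S T : Set (α × α)) (p q : Q) :
    reachRel (addIsolated r ⊔ edgeStep none none S ⊔ edgeStep (some s) none R ⊔
        edgeStep none (some t) T) (some p) (some q) =
      reachRel (r ⊔ edgeStep s t (R ○ (RelStar S ○ T))) p q := by
  simp only [reachRel_sup_edgeStep, reachRel_addIsolated_some_some,
    reachRel_addIsolated_none_none, reachRel_addIsolated_some_none,
    reachRel_addIsolated_none_some, SetRel.id_comp, SetRel.comp_id, SetRel.empty_comp,
    SetRel.comp_empty, Set.union_empty, Set.empty_union, relStar_empty, id_union_comp_relStar,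
    SetRel.comp_assoc]

theorem isRational_reachRel_finset_sup {B : Set (Set (α × α))} (src tgt : ι → Q)
    {R : ι → Set (α × α)} (hR : ∀ e, R e ∈ B) (T : Finset ι) (p q : Q) :
    IsRational B (reachRel (T.sup fun e => edgeStep (src e) (tgt e) (R e)) p q) := by
  classical
  induction T using Finset.induction_on generalizing p q with
  | empty =>
    rw [Finset.sup_empty]
    rcases eq_or_ne p q with rfl | hpq
    · exact (reachRel_bot_self (α := α) p).symm ▸ .id
    · exact (reachRel_bot_of_ne (α := α) hpq).symm ▸ .empty
  | insert e T _ ih =>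
    rw [Finset.sup_insert, sup_comm, reachRel_sup_edgeStep]
    have he := IsRational.of_mem (hR e)
    exact (ih p q).union ((ih p _).comp (he.comp (((ih _ _).comp he).star.comp (ih _ q))))

end Reachability

/-! ### Reachability relations of PVASS -/

/-- The effect on the counters of a PVASS edge with update `u` and test level `t`. -/
def edgeRel {d : ℕ} (u : Fin d → ℤ) (t : ℕ) : Set (NVec d × NVec d) :=
  {xy | (∀ j : Fin d, (j : ℕ) < t → xy.1 j = 0) ∧ ∀ i, (xy.2 i : ℤ) = xy.1 i + u i}

/-- The basic relations from which the reachability relations of `d`-dimensional PVASS are built: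
the effects of single edges. -/
def edgeRels (d : ℕ) : Set (Set (NVec d × NVec d)) :=
  {R | ∃ u : Fin d → ℤ, ∃ t ≤ d, edgeRel u t = R}

theorem edgeRel_mem_edgeRels {d t : ℕ} (u : Fin d → ℤ) (ht : t ≤ d) : edgeRel u t ∈ edgeRels d :=
  ⟨u, t, ht, rfl⟩

theorem edgeRel_zero_zero {d : ℕ} : edgeRel 0 0 = (SetRel.id : Set (NVec d × NVec d)) := by
  ext ⟨x, y⟩
  simp [edgeRel, funext_iff, eq_comm]

theorem graph_add_eq_edgeRel {d : ℕ} (w : NVec d) :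
    Function.graph (· + w) = edgeRel (fun i => (w i : ℤ)) 0 := by
  ext ⟨x, y⟩
  simp only [Function.mem_graph, edgeRel, funext_iff, Pi.add_apply, Set.mem_ofPred_eq,
    Nat.not_lt_zero, false_imp_iff, implies_true, true_and]
  exact forall_congr' fun i => by omega

theorem graph_add_inv_eq_edgeRel {d : ℕ} (w : NVec d) :
    (Function.graph (· + w)).inv = edgeRel (fun i => -(w i : ℤ)) 0 := by
  ext ⟨x, y⟩
  simp only [SetRel.mem_inv, Function.mem_graph, edgeRel, funext_iff, Pi.add_apply,
    Set.mem_ofPred_eq, Nat.not_lt_zero, false_imp_iff, implies_true, true_and]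
  exact forall_congr' fun i => by omega

namespace PVASS

variable {d : ℕ}

theorem step_eq_sup (V : PVASS d) [Fintype V.E] :
    V.Step = Finset.univ.sup fun e =>
      edgeStep (V.src e) (V.tgt e) (edgeRel (V.upd e) (V.test e)) := by
  ext c c'
  rw [Finset.sup_univ_eq_iSup, iSup_apply, iSup_apply, iSup_Prop_eq]
  exact exists_congr fun e => and_congr eq_comm (and_congr eq_comm Iff.rfl)

theorem isRational_reachRel (V : PVASS d) (p q : V.Q) :
    IsRational (edgeRels d) (reachRel V.Step p q) := by
  have := V.fintypeE
  rw [V.step_eq_sup]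
  exact isRational_reachRel_finset_sup _ _
    (fun e => edgeRel_mem_edgeRels (V.upd e) (V.test_le e)) _ p q

/-- The PVASS with states `Q` and no edges. -/
def discrete (d : ℕ) (Q : Type) [Fintype Q] : PVASS d where
  Q := Q
  E := Empty
  fintypeQ := inferInstance
  fintypeE := inferInstance
  src := Empty.elim
  tgt := Empty.elim
  upd := Empty.elim
  test := Empty.elim
  test_le := Empty.rec

/-- `V` with an additional edge from `s` to `t`. -/
def addEdge (V : PVASS d) (s t : V.Q) (u : Fin d → ℤ) {l : ℕ} (hl : l ≤ d) : PVASS d where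
  Q := V.Q
  E := Option V.E
  fintypeQ := V.fintypeQ
  fintypeE := have := V.fintypeE; inferInstance
  src e := e.elim s V.src
  tgt e := e.elim t V.tgt
  upd e := e.elim u V.upd
  test e := e.elim l V.test
  test_le := Option.rec hl V.test_le

/-- `V` with an additional isolated state `none`. -/
def addState (V : PVASS d) : PVASS d where
  Q := Option V.Q
  E := V.E
  fintypeQ := have := V.fintypeQ; inferInstance
  fintypeE := V.fintypeE
  src e := some (V.src e)
  tgt e := some (V.tgt e)
  upd := V.upd
  test := V.test
  test_le := V.test_le

theorem step_discrete (d : ℕ) (Q : Type) [Fintype Q] : (discrete d Q).Step = ⊥ := by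
  ext c c'
  exact ⟨fun ⟨e, _⟩ => e.elim, False.elim⟩

theorem step_addEdge (V : PVASS d) (s t : V.Q) (u : Fin d → ℤ) {l : ℕ} (hl : l ≤ d) :
    (V.addEdge s t u hl).Step = V.Step ⊔ edgeStep s t (edgeRel u l) := by
  ext c c'
  refine Option.exists.trans (or_comm.trans (or_congr Iff.rfl ?_))
  exact and_congr eq_comm (and_congr eq_comm Iff.rfl)

theorem reachRel_addEdge_discrete {Q : Type} [Fintype Q]
    {s t : (discrete d Q).Q} (hst : s ≠ t) (u : Fin d → ℤ) {l : ℕ} (hl : l ≤ d) :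
    reachRel ((discrete d Q).addEdge s t u hl).Step s t = edgeRel u l := by
  rw [step_addEdge, step_discrete, bot_sup_eq]
  exact reachRel_edgeStep_of_ne hst (edgeRel u l)

theorem step_addState (V : PVASS d) : V.addState.Step = addIsolated V.Step := by
  ext ⟨p, x⟩ ⟨q, y⟩
  constructor
  · rintro ⟨e, hp, hq, h⟩
    exact ⟨(V.src e, x), (V.tgt e, y), ⟨e, rfl, rfl, h⟩, Prod.ext hp rfl, Prod.ext hq rfl⟩
  · rintro ⟨_, _, ⟨e, hp, hq, h⟩, heq, heq'⟩
    cases heq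
    cases heq'
    exact ⟨e, congrArg some hp, congrArg some hq, h⟩

/-- `R` is *adjoinable* if an edge labelled `R` can be added to any PVASS and then simulated by
ordinary PVASS edges, possibly using further states. -/
def IsAdjoinable (R : Set (NVec d × NVec d)) : Prop :=
  ∀ (V : PVASS d) (s t : V.Q), ∃ (W : PVASS d) (i : V.Q → W.Q),
    ∀ p q, reachRel W.Step (i p) (i q) = reachRel (V.Step ⊔ edgeStep s t R) p q

namespace IsAdjoinable

variable {R S T : Set (NVec d × NVec d)}

theorem empty : IsAdjoinable (∅ : Set (NVec d × NVec d)) := fun V s t =>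
  ⟨V, id, fun p q => by rw [edgeStep_empty, sup_bot_eq]; rfl⟩

theorem of_mem_edgeRels (hR : R ∈ edgeRels d) : IsAdjoinable R := by
  obtain ⟨u, l, hl, rfl⟩ := hR
  exact fun V s t => ⟨V.addEdge s t u hl, id, fun p q => by rw [step_addEdge]; rfl⟩

theorem union (hR : IsAdjoinable R) (hS : IsAdjoinable S) : IsAdjoinable (R ∪ S) := by
  intro V s t
  obtain ⟨V₁, i₁, h₁⟩ := hR V s t
  obtain ⟨V₂, i₂, h₂⟩ := hS V₁ (i₁ s) (i₁ t)
  refine ⟨V₂, i₂ ∘ i₁, fun p q => ?_⟩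
  rw [edgeStep_union, ← sup_assoc, ← reachRel_sup_edgeStep_congr h₁]
  exact h₂ _ _

theorem comp_relStar_comp (hR : IsAdjoinable R) (hS : IsAdjoinable S) (hT : IsAdjoinable T) :
    IsAdjoinable (R ○ (RelStar S ○ T)) := by
  intro V s t
  obtain ⟨V₁, i₁, h₁⟩ := hS V.addState none none
  obtain ⟨V₂, i₂, h₂⟩ := hR V₁ (i₁ (some s)) (i₁ none)
  obtain ⟨V₃, i₃, h₃⟩ := hT V₂ (i₂ (i₁ none)) (i₂ (i₁ (some t)))
  have h₁₂ (p q) := (h₂ (i₁ p) (i₁ q)).trans (reachRel_sup_edgeStep_congr h₁ _ _ R p q)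
  have h₁₂₃ (p q) := (h₃ (i₂ (i₁ p)) (i₂ (i₁ q))).trans
    (reachRel_sup_edgeStep_congr (i := i₂ ∘ i₁) h₁₂ _ _ T p q)
  refine ⟨V₃, fun p => i₃ (i₂ (i₁ (some p))), fun p q => (h₁₂₃ _ _).trans ?_⟩
  rw [step_addState]
  exact reachRel_detour V.Step s t R S T p q

theorem comp (hR : IsAdjoinable R) (hS : IsAdjoinable S) : IsAdjoinable (R ○ S) := by
  have h := comp_relStar_comp hR empty hS
  rwa [relStar_empty, SetRel.id_comp] at h

protected theorem id : IsAdjoinable (SetRel.id : Set (NVec d × NVec d)) := by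
  rw [← edgeRel_zero_zero]
  exact of_mem_edgeRels (edgeRel_mem_edgeRels 0 d.zero_le)

theorem star (hR : IsAdjoinable R) : IsAdjoinable (RelStar R) := by
  have h := comp_relStar_comp .id hR .id
  rwa [SetRel.id_comp, SetRel.comp_id] at h

end IsAdjoinable

end PVASS

theorem IsRational.isAdjoinable {d : ℕ} {R : Set (NVec d × NVec d)}
    (hR : IsRational (edgeRels d) R) : PVASS.IsAdjoinable R := by
  induction hR with
  | of_mem hR => exact .of_mem_edgeRels hR
  | empty => exact .empty
  | comp _ _ ihR ihS => exact ihR.comp ihS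
  | union _ _ ihR ihS => exact ihR.union ihS
  | star _ ih => exact ih.star

theorem isRational_edgeRels_iff_exists_reachRel {d : ℕ} {R : Set (NVec d × NVec d)} :
    IsRational (edgeRels d) R ↔ ∃ (V : PVASS d) (p q : V.Q), reachRel V.Step p q = R := by
  constructor
  · intro hR
    obtain ⟨V, i, h⟩ := hR.isAdjoinable (PVASS.discrete d Bool) false true
    refine ⟨V, i false, i true, (h _ _).trans ?_⟩
    rw [PVASS.step_discrete, bot_sup_eq]
    exact reachRel_edgeStep_of_ne Bool.false_ne_true R
  · rintro ⟨V, p, q, rfl⟩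
    exact V.isRational_reachRel p q

/-! ### Changing the dimension -/

section Padding

variable {a b d D : ℕ}

/-- The position in `Fin d` of the `i`-th of the last `a` coordinates. -/
def tailIdx (h : a ≤ d) (i : Fin a) : Fin d :=
  Fin.cast (Nat.sub_add_cancel h) (Fin.natAdd (d - a) i)

/-- The embedding of `ℕ^a` into `ℕ^d` that prepends zeros. -/
def zeroPad (h : a ≤ d) : NVec a → NVec d := fitVec h 0

theorem fitVec_tailIdx (h : a ≤ d) (b : NVec (d - a)) (x : NVec a) (i : Fin a) :
    fitVec h b x (tailIdx h i) = x i :=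
  Fin.append_right b x i

theorem lt_or_exists_tailIdx_eq (h : a ≤ d) (j : Fin d) :
    (j : ℕ) < d - a ∨ ∃ i, tailIdx h i = j := by
  rcases lt_or_ge (j : ℕ) (d - a) with hj | hj
  · exact .inl hj
  · exact .inr ⟨⟨j - (d - a), by omega⟩, Fin.ext (Nat.add_sub_of_le hj)⟩

theorem tailIdx_injective (h : a ≤ d) : (tailIdx h).Injective := fun i j hij => by
  simpa [tailIdx] using hij

theorem le_tailIdx (h : a ≤ d) (i : Fin a) : d - a ≤ tailIdx h i := Nat.le_add_right _ _

theorem fitVec_of_lt (h : a ≤ d) (b : NVec (d - a)) (x : NVec a) {j : Fin d}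
    (hj : (j : ℕ) < d - a) : fitVec h b x j = b ⟨j, hj⟩ :=
  Fin.append_left b x ⟨j, hj⟩

theorem zeroPad_tailIdx (h : a ≤ d) (x : NVec a) (i : Fin a) : zeroPad h x (tailIdx h i) = x i :=
  fitVec_tailIdx h 0 x i

theorem zeroPad_of_lt (h : a ≤ d) (x : NVec a) {j : Fin d} (hj : (j : ℕ) < d - a) :
    zeroPad h x j = 0 :=
  fitVec_of_lt h 0 x hj

theorem zeroPad_injective (h : a ≤ d) : (zeroPad h).Injective := fun x y hxy => by
  ext i
  rw [← zeroPad_tailIdx h x, hxy, zeroPad_tailIdx]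

theorem zeroPad_le_rfl : zeroPad (le_refl d) = id := by
  ext x j
  rcases lt_or_exists_tailIdx_eq le_rfl j with hj | ⟨i, rfl⟩
  · omega
  · rw [zeroPad_tailIdx]
    exact congrArg x (Fin.ext (by simp [tailIdx]))

theorem fitVec_eq_comp_zeroPad (h : a ≤ d) (b : NVec (d - a)) :
    fitVec h b = (· + fitVec h b 0) ∘ zeroPad h := by
  ext x j
  rcases lt_or_exists_tailIdx_eq h j with hj | ⟨i, rfl⟩
  · simp [fitVec_of_lt h _ _ hj, zeroPad_of_lt h _ hj]
  · simp [fitVec_tailIdx, zeroPad_tailIdx]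

theorem mem_range_zeroPad (h : a ≤ d) {w : NVec d} :
    w ∈ Set.range (zeroPad h) ↔ ∀ j : Fin d, (j : ℕ) < d - a → w j = 0 := by
  constructor
  · rintro ⟨x, rfl⟩ j hj
    exact zeroPad_of_lt h x hj
  · intro hw
    refine ⟨w ∘ tailIdx h, ?_⟩
    ext j
    rcases lt_or_exists_tailIdx_eq h j with hj | ⟨i, rfl⟩
    · rw [zeroPad_of_lt h _ hj, hw j hj]
    · exact zeroPad_tailIdx h _ i

theorem zeroPad_comp_zeroPad (h : a ≤ d) (h' : d ≤ D) :
    zeroPad h' ∘ zeroPad h = zeroPad (h.trans h') := by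
  ext x j
  rcases lt_or_exists_tailIdx_eq (h.trans h') j with hj | ⟨i, rfl⟩
  · rw [zeroPad_of_lt _ _ hj]
    rcases lt_or_exists_tailIdx_eq h' j with hj' | ⟨k, rfl⟩
    · exact zeroPad_of_lt h' _ hj'
    · refine (zeroPad_tailIdx h' _ k).trans (zeroPad_of_lt h x ?_)
      simp only [tailIdx, Fin.val_cast, Fin.val_natAdd] at hj
      omega
  · have htail : tailIdx (h.trans h') i = tailIdx h' (tailIdx h i) := by
      ext
      simp only [tailIdx, Fin.val_cast, Fin.val_natAdd]
      omega
    rw [zeroPad_tailIdx, htail, Function.comp_apply, zeroPad_tailIdx, zeroPad_tailIdx]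

theorem extend_tailIdx_of_lt (h : d ≤ D) (u : Fin d → ℤ) {j : Fin D} (hj : (j : ℕ) < D - d) :
    Function.extend (tailIdx h) u 0 j = 0 := by
  rw [Function.extend_apply']
  · rfl
  · rintro ⟨i, rfl⟩
    exact absurd hj (le_tailIdx h i).not_gt

theorem zeroPad_mem_edgeRel (h : d ≤ D) (u : Fin d → ℤ) (t : ℕ) (x y : NVec d) :
    (zeroPad h x, zeroPad h y) ∈ edgeRel (Function.extend (tailIdx h) u 0) (D - d + t) ↔
      (x, y) ∈ edgeRel u t := by
  have hval (i : Fin d) : (tailIdx h i : ℕ) = D - d + i := rfl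
  constructor
  · rintro ⟨htest, hupd⟩
    refine ⟨fun i hi => ?_, fun i => ?_⟩
    · simpa [zeroPad_tailIdx] using htest (tailIdx h i) (by rw [hval]; omega)
    · simpa [zeroPad_tailIdx, (tailIdx_injective h).extend_apply] using hupd (tailIdx h i)
  · rintro ⟨htest, hupd⟩
    refine ⟨fun j hjt => ?_, fun j => ?_⟩ <;>
      rcases lt_or_exists_tailIdx_eq h j with hj | ⟨i, rfl⟩
    · exact zeroPad_of_lt h x hj
    · rw [hval] at hjt
      simpa [zeroPad_tailIdx] using htest i (by omega)
    · simp [zeroPad_of_lt h _ hj, extend_tailIdx_of_lt h u hj]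
    · simpa [zeroPad_tailIdx, (tailIdx_injective h).extend_apply] using hupd i

theorem image_zeroPad_edgeRel (h : d ≤ D) (u : Fin d → ℤ) (t : ℕ) :
    Prod.map (zeroPad h) (zeroPad h) '' edgeRel u t =
      edgeRel (Function.extend (tailIdx h) u 0) (D - d + t) := by
  ext ⟨v, w⟩
  constructor
  · rintro ⟨⟨x, y⟩, hxy, heq⟩
    cases heq
    exact (zeroPad_mem_edgeRel h u t x y).2 hxy
  · intro hvw
    have hv (j : Fin D) (hj : (j : ℕ) < D - d) : v j = 0 := hvw.1 j (by omega)
    have hw (j : Fin D) (hj : (j : ℕ) < D - d) : w j = 0 := by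
      simpa [hv j hj, extend_tailIdx_of_lt h u hj] using hvw.2 j
    obtain ⟨x, rfl⟩ := (mem_range_zeroPad h).2 hv
    obtain ⟨y, rfl⟩ := (mem_range_zeroPad h).2 hw
    exact ⟨(x, y), (zeroPad_mem_edgeRel h u t x y).1 hvw, rfl⟩

theorem edgeRel_sub_eq_comp (h : a ≤ d) (u : Fin d → ℤ) :
    edgeRel u (d - a) =
      (zeroPad h).graph.inv ○ ((zeroPad h).graph ○ edgeRel u 0) := by
  ext ⟨x, y⟩
  constructor
  · rintro ⟨htest, hupd⟩
    obtain ⟨z, rfl⟩ := (mem_range_zeroPad h).2 htest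
    exact ⟨z, rfl, zeroPad h z, rfl, fun j hj => absurd hj (Nat.not_lt_zero j), hupd⟩
  · rintro ⟨z, hz, _, rfl, -, hupd⟩
    obtain rfl : zeroPad h z = x := hz
    exact ⟨(mem_range_zeroPad h).1 ⟨z, rfl⟩, hupd⟩

end Padding

theorem IsRational.image_zeroPad {d D : ℕ} (h : d ≤ D) {R : Set (NVec d × NVec d)}
    (hR : IsRational (edgeRels d) R) :
    IsRational (edgeRels D) (Prod.map (zeroPad h) (zeroPad h) '' R) := by
  have hB : ∀ R ∈ edgeRels d,
      IsRational (edgeRels D) (Prod.map (zeroPad h) (zeroPad h) '' R) := by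
    rintro _ ⟨u, t, ht, rfl⟩
    rw [image_zeroPad_edgeRel]
    exact .of_mem (edgeRel_mem_edgeRels _ (by omega))
  refine image_prodMap (zeroPad_injective h) ?_ hB hR
  rw [← edgeRel_zero_zero]
  exact hB _ (edgeRel_mem_edgeRels 0 d.zero_le)

/-! ### Sections -/

section Sections

variable {a b c d D : ℕ}

theorem IsRational.image_preimage_fitVec {R : Set (NVec d × NVec d)}
    (hR : IsRational (edgeRels d) R) (ha : a ≤ d) (hb : b ≤ d) (bs : NVec (d - a))
    (bt : NVec (d - b)) :
    IsRational (edgeRels d) (Prod.map (zeroPad ha) (zeroPad hb) ''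
      (Prod.map (fitVec ha bs) (fitVec hb bt) ⁻¹' R)) := by
  have hedge (u : Fin d → ℤ) : IsRational (edgeRels d) (edgeRel u 0) :=
    .of_mem (edgeRel_mem_edgeRels u d.zero_le)
  rw [fitVec_eq_comp_zeroPad ha, fitVec_eq_comp_zeroPad hb, image_prodMap_preimage_comp,
    graph_add_eq_edgeRel, graph_add_inv_eq_edgeRel]
  exact (IsRational.id.image_zeroPad ha).comp ((hedge _).comp
    (hR.comp ((hedge _).comp (IsRational.id.image_zeroPad hb))))

theorem isPVASSSection_iff_isRational {X : Set (NVec a × NVec b)} :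
    IsPVASSSection X ↔ ∃ (d : ℕ) (ha : a ≤ d) (hb : b ≤ d),
      IsRational (edgeRels d) (Prod.map (zeroPad ha) (zeroPad hb) '' X) := by
  constructor
  · rintro ⟨d, ha, hb, V, p, q, bs, bt, rfl⟩
    exact ⟨d, ha, hb, (V.isRational_reachRel p q).image_preimage_fitVec ha hb bs bt⟩
  · rintro ⟨d, ha, hb, hX⟩
    obtain ⟨V, p, q, hV⟩ := isRational_edgeRels_iff_exists_reachRel.1 hX
    refine ⟨d, ha, hb, V, p, q, 0, 0, ?_⟩
    rw [← Set.preimage_image_eq X ((zeroPad_injective ha).prodMap (zeroPad_injective hb)), ← hV]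
    rfl

theorem isRational_image_zeroPad_mono {X : Set (NVec a × NVec b)} {ha : a ≤ d} {hb : b ≤ d}
    (hX : IsRational (edgeRels d) (Prod.map (zeroPad ha) (zeroPad hb) '' X)) (h : d ≤ D) :
    IsRational (edgeRels D) (Prod.map (zeroPad (ha.trans h)) (zeroPad (hb.trans h)) '' X) := by
  rw [← zeroPad_comp_zeroPad ha h, ← zeroPad_comp_zeroPad hb h, ← Prod.map_comp_map,
    Set.image_comp]
  exact hX.image_zeroPad h

namespace IsPVASSSection

theorem comp {X : Set (NVec a × NVec b)} {Y : Set (NVec b × NVec c)} (hX : IsPVASSSection X)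
    (hY : IsPVASSSection Y) : IsPVASSSection (X ○ Y) := by
  obtain ⟨d, ha, hb, hX⟩ := isPVASSSection_iff_isRational.1 hX
  obtain ⟨D, _, hc, hY⟩ := isPVASSSection_iff_isRational.1 hY
  refine isPVASSSection_iff_isRational.2
    ⟨max d D, ha.trans (le_max_left d D), hc.trans (le_max_right d D), ?_⟩
  rw [image_prodMap_comp (zeroPad_injective (hb.trans (le_max_left d D)))]
  exact (isRational_image_zeroPad_mono hX (le_max_left d D)).comp
    (isRational_image_zeroPad_mono hY (le_max_right d D))

theorem union {X Y : Set (NVec a × NVec b)} (hX : IsPVASSSection X) (hY : IsPVASSSection Y) :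
    IsPVASSSection (X ∪ Y) := by
  obtain ⟨d, ha, hb, hX⟩ := isPVASSSection_iff_isRational.1 hX
  obtain ⟨D, _, _, hY⟩ := isPVASSSection_iff_isRational.1 hY
  refine isPVASSSection_iff_isRational.2
    ⟨max d D, ha.trans (le_max_left d D), hb.trans (le_max_left d D), ?_⟩
  rw [Set.image_union]
  exact (isRational_image_zeroPad_mono hX (le_max_left d D)).union
    (isRational_image_zeroPad_mono hY (le_max_right d D))

theorem star {X : Set (NVec a × NVec a)} (hX : IsPVASSSection X) :
    IsPVASSSection (RelStar X) := by
  obtain ⟨d, ha, _, hX⟩ := isPVASSSection_iff_isRational.1 hX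
  refine isPVASSSection_iff_isRational.2 ⟨d, ha, ha, ?_⟩
  rw [image_prodMap_relStar (zeroPad_injective ha)]
  exact hX.star.comp (IsRational.id.image_zeroPad ha)

end IsPVASSSection

theorem IsVASSSection.isPVASSSection {X : Set (NVec a × NVec b)} (hX : IsVASSSection X) :
    IsPVASSSection X := by
  obtain ⟨d, ha, hb, V, _, hX⟩ := hX
  exact ⟨d, ha, hb, V, hX⟩

theorem Expr.isPVASSSection_rel (E : Expr a b) : IsPVASSSection E.Rel := by
  induction E with
  | leaf _ hY => exact hY.isPVASSSection
  | comp _ _ ih₁ ih₂ => exact ih₁.comp ih₂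
  | union _ _ ih₁ ih₂ => exact ih₁.union ih₂
  | star _ ih => exact ih.star

theorem isVASSSection_preimage_zeroPad {V : PVASS d} (hV : ∀ e, V.test e = 0) {p q : V.Q}
    {R : Set (NVec d × NVec d)} (hR : reachRel V.Step p q = R) (ha : a ≤ d) (hb : b ≤ d) :
    IsVASSSection (Prod.map (zeroPad ha) (zeroPad hb) ⁻¹' R) :=
  ⟨d, ha, hb, V, hV, p, q, 0, 0, hR ▸ rfl⟩

theorem isVASSSection_of_reachRel_eq {V : PVASS d} (hV : ∀ e, V.test e = 0) {p q : V.Q}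
    {R : Set (NVec d × NVec d)} (hR : reachRel V.Step p q = R) : IsVASSSection R := by
  simpa only [zeroPad_le_rfl, Prod.map_id, Set.preimage_id] using
    isVASSSection_preimage_zeroPad hV hR le_rfl le_rfl

theorem isVASSSection_empty : IsVASSSection (∅ : Set (NVec d × NVec d)) := by
  refine isVASSSection_of_reachRel_eq (V := .discrete d Bool) (p := false) (q := true)
    Empty.rec ?_
  rw [PVASS.step_discrete]
  exact reachRel_bot_of_ne Bool.false_ne_true

theorem isVASSSection_edgeRel_zero (u : Fin d → ℤ) : IsVASSSection (edgeRel u 0) := by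
  refine isVASSSection_of_reachRel_eq
    (V := (PVASS.discrete d Bool).addEdge false true u d.zero_le) (p := false) (q := true)
    (Option.rec rfl Empty.rec) ?_
  exact PVASS.reachRel_addEdge_discrete Bool.false_ne_true u d.zero_le

theorem isVASSSection_preimage_zeroPad_id (ha : a ≤ d) (hb : b ≤ d) :
    IsVASSSection (Prod.map (zeroPad ha) (zeroPad hb) ⁻¹' SetRel.id) := by
  refine isVASSSection_preimage_zeroPad (V := .discrete d Unit) (p := ()) (q := ())
    Empty.rec ?_ ha hb
  rw [PVASS.step_discrete]
  exact reachRel_bot_self _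

theorem isVASSSection_graph_zeroPad (h : a ≤ d) : IsVASSSection (zeroPad h).graph := by
  have hsection := isVASSSection_preimage_zeroPad_id h le_rfl
  rwa [zeroPad_le_rfl] at hsection

theorem isVASSSection_graph_zeroPad_inv (h : a ≤ d) :
    IsVASSSection (zeroPad h).graph.inv := by
  have hsection := isVASSSection_preimage_zeroPad_id le_rfl h
  rw [zeroPad_le_rfl] at hsection
  convert hsection using 1
  ext ⟨x, y⟩
  exact eq_comm

theorem exists_expr_rel_eq_edgeRel {t : ℕ} (u : Fin d → ℤ) (ht : t ≤ d) :
    ∃ E : Expr d d, E.Rel = edgeRel u t := by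
  have h : d - t ≤ d := Nat.sub_le d t
  have hcomp := edgeRel_sub_eq_comp h u
  rw [Nat.sub_sub_self ht] at hcomp
  exact ⟨.comp (.leaf _ (isVASSSection_graph_zeroPad_inv h))
    (.comp (.leaf _ (isVASSSection_graph_zeroPad h)) (.leaf _ (isVASSSection_edgeRel_zero u))),
    hcomp.symm⟩

theorem IsRational.exists_expr_rel_eq {R : Set (NVec d × NVec d)}
    (hR : IsRational (edgeRels d) R) : ∃ E : Expr d d, E.Rel = R := by
  induction hR with
  | of_mem hR =>
    obtain ⟨u, t, ht, rfl⟩ := hR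
    exact exists_expr_rel_eq_edgeRel u ht
  | empty => exact ⟨.leaf ∅ isVASSSection_empty, rfl⟩
  | comp _ _ ihR ihS =>
    obtain ⟨⟨E, rfl⟩, F, rfl⟩ := And.intro ihR ihS
    exact ⟨.comp E F, rfl⟩
  | union _ _ ihR ihS =>
    obtain ⟨⟨E, rfl⟩, F, rfl⟩ := And.intro ihR ihS
    exact ⟨.union E F, rfl⟩
  | star _ ih =>
    obtain ⟨E, rfl⟩ := ih
    exact ⟨.star E, rfl⟩

end Sections

/-- A relation `X ⊆ ℕ^{d'} × ℕ^{d''}` is a PVASS section if and only if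
`X = Rel(E)` for some expression `E` of type `E_{d',d''}` over VASS sections. -/
theorem isPVASSSection_iff_exists_expr {d' d'' : ℕ} (X : Set (NVec d' × NVec d'')) :
    IsPVASSSection X ↔ ∃ E : Expr d' d'', E.Rel = X := by
  constructor
  · intro hX
    obtain ⟨d, h', h'', hrational⟩ := isPVASSSection_iff_isRational.1 hX
    obtain ⟨E, hE⟩ := hrational.exists_expr_rel_eq
    have hpad := isVASSSection_graph_zeroPad h'
    have hunpad := isVASSSection_graph_zeroPad_inv h''
    refine ⟨.comp (.leaf _ hpad) (.comp E (.leaf _ hunpad)), ?_⟩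
    calc
      _ = (zeroPad h').graph ○ (E.Rel ○ (zeroPad h'').graph.inv) := rfl
      _ = X := by
        rw [hE]
        exact graph_comp_image_prodMap_comp_graph_inv (zeroPad_injective h')
          (zeroPad_injective h'') X
  · rintro ⟨E, rfl⟩
    exact E.isPVASSSection_rel
end

section
/- Let P₁ ⊆ ℕ^{d'} × ℕ^{m} and P₂ ⊆ ℕ^{m} × ℕ^{d''} be well-directed periodic relations. Then the composition P₁ ∘ P₂ ⊆ ℕ^{d'} × ℕ^{d''} is a well-directed periodic relation. -/
/-- A relation `⊆ ℕ^a × ℕ^b`, viewed as a subset of `ℕ^{a+b}`. -/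
abbrev PairN (a b : ℕ) := (Fin a → ℕ) × (Fin b → ℕ)

/-- The corresponding rational space `ℚ^a × ℚ^b ≅ ℚ^{a+b}`. -/
abbrev PairQ (a b : ℕ) := (Fin a → ℚ) × (Fin b → ℚ)

/-- Coordinatewise cast of a pair of natural vectors into rational vectors. -/
def castPQ {a b : ℕ} (x : PairN a b) : PairQ a b :=
  (fun i => (x.1 i : ℚ), fun i => (x.2 i : ℚ))

/-- A set in a commutative monoid is periodic if it contains `0` and is closed
under addition. -/
def IsPeriodic {M : Type*} [AddCommMonoid M] (P : Set M) : Prop :=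
  0 ∈ P ∧ ∀ p ∈ P, ∀ q ∈ P, p + q ∈ P

/-- `P ⊆ ℕ^{a+b}` is well-directed: every sequence of elements of `P` has an infinite
subsequence `(p_{m_k})` such that `p_{m_j} + ℕ·(p_{m_k} − p_{m_j}) ⊆ P` for all
`j ≤ k`. -/
def WellDirected {a b : ℕ} (P : Set (PairN a b)) : Prop :=
  ∀ p : ℕ → PairN a b, (∀ m, p m ∈ P) →
    ∃ φ : ℕ → ℕ, StrictMono φ ∧
      ∀ j k : ℕ, j ≤ k → ∀ t : ℕ, ∃ q ∈ P,
        castPQ q = castPQ (p (φ j)) + (t : ℚ) • (castPQ (p (φ k)) - castPQ (p (φ j)))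

section Monoid

variable {M α β γ : Type*} [AddCommMonoid M] [AddCommMonoid α] [AddCommMonoid β] [AddCommMonoid γ]

/-- The inclusion `p + ℕ·(q - p) ⊆ P`, with `x = p + t·(q - p)` encoded without subtraction as
`x + t·p = p + t·q`. -/
def ContainsRay (P : Set M) (p q : M) : Prop :=
  ∀ t : ℕ, ∃ x ∈ P, x + t • p = p + t • q

/-- Well-directedness of a subset of a commutative monoid; it extends `WellDirected` from `ℕ^{a+b}`
by means of the subtraction-free rays of `ContainsRay`. -/
def IsWellDirected (P : Set M) : Prop :=
  ∀ p : ℕ → M, (∀ n, p n ∈ P) →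
    ∃ φ : ℕ → ℕ, StrictMono φ ∧ ∀ j k, j ≤ k → ContainsRay P (p (φ j)) (p (φ k))

theorem IsPeriodic.relComp {P₁ : Set (α × β)} {P₂ : Set (β × γ)}
    (h₁ : IsPeriodic P₁) (h₂ : IsPeriodic P₂) : IsPeriodic (RelComp P₁ P₂) := by
  refine ⟨⟨0, h₁.1, h₂.1⟩, ?_⟩
  rintro p ⟨x, hpx, hxp⟩ q ⟨y, hqy, hyq⟩
  exact ⟨x + y, h₁.2 _ hpx _ hqy, h₂.2 _ hxp _ hyq⟩

theorem ContainsRay.relComp [IsCancelAdd β] {P₁ : Set (α × β)} {P₂ : Set (β × γ)}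
    {a a' : α} {b b' : β} {c c' : γ}
    (h₁ : ContainsRay P₁ (a, b) (a', b')) (h₂ : ContainsRay P₂ (b, c) (b', c')) :
    ContainsRay (RelComp P₁ P₂) (a, c) (a', c') := by
  intro t
  obtain ⟨⟨u, v⟩, huv, huv_eq⟩ := h₁ t
  obtain ⟨⟨v', w⟩, hvw, hvw_eq⟩ := h₂ t
  obtain ⟨hu, hv⟩ := Prod.mk.inj huv_eq
  obtain ⟨hv', hw⟩ := Prod.mk.inj hvw_eq
  obtain rfl : v = v' := add_right_cancel (hv.trans hv'.symm)
  exact ⟨(u, w), ⟨v, huv, hvw⟩, Prod.ext hu hw⟩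

theorem IsWellDirected.relComp [IsCancelAdd β] {P₁ : Set (α × β)} {P₂ : Set (β × γ)}
    (h₁ : IsWellDirected P₁) (h₂ : IsWellDirected P₂) : IsWellDirected (RelComp P₁ P₂) := by
  intro p hp
  choose x hpx hxp using hp
  obtain ⟨φ, hφ, ray₁⟩ := h₁ (fun n => ((p n).1, x n)) hpx
  obtain ⟨ψ, hψ, ray₂⟩ := h₂ (fun n => (x (φ n), (p (φ n)).2)) fun n => hxp (φ n)
  exact ⟨φ ∘ ψ, hφ.comp hψ, fun j k hjk =>
    (ray₁ (ψ j) (ψ k) (hψ.monotone hjk)).relComp (ray₂ j k hjk)⟩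

theorem relComp_wellDirected_periodic_general [IsCancelAdd β]
    (P₁ : Set (α × β)) (P₂ : Set (β × γ))
    (h₁p : IsPeriodic P₁) (h₁w : IsWellDirected P₁)
    (h₂p : IsPeriodic P₂) (h₂w : IsWellDirected P₂) :
    IsPeriodic (RelComp P₁ P₂) ∧ IsWellDirected (RelComp P₁ P₂) :=
  ⟨h₁p.relComp h₂p, h₁w.relComp h₂w⟩

end Monoid

section NatVectors

variable {a b : ℕ}

theorem castPQ_injective : Function.Injective (castPQ : PairN a b → PairQ a b) :=
  Nat.cast_injective.comp_left.prodMap Nat.cast_injective.comp_left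

theorem castPQ_add (x y : PairN a b) : castPQ (x + y) = castPQ x + castPQ y := by
  ext <;> simp [castPQ]

theorem castPQ_nsmul (t : ℕ) (x : PairN a b) : castPQ (t • x) = (t : ℚ) • castPQ x := by
  ext <;> simp [castPQ]

theorem castPQ_eq_add_smul_sub_iff {x p q : PairN a b} {t : ℕ} :
    castPQ x = castPQ p + (t : ℚ) • (castPQ q - castPQ p) ↔ x + t • p = p + t • q := by
  rw [smul_sub, ← add_sub_assoc, eq_sub_iff_add_eq, ← castPQ_nsmul, ← castPQ_nsmul,
    ← castPQ_add, ← castPQ_add, castPQ_injective.eq_iff]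

theorem wellDirected_iff_isWellDirected {P : Set (PairN a b)} :
    WellDirected P ↔ IsWellDirected P := by
  simp only [WellDirected, IsWellDirected, ContainsRay, castPQ_eq_add_smul_sub_iff]

end NatVectors

/-- The composition of well-directed periodic relations is a
well-directed periodic relation. -/
theorem relComp_wellDirected_periodic {d' m d'' : ℕ}
    (P₁ : Set (PairN d' m)) (P₂ : Set (PairN m d''))
    (h₁p : IsPeriodic P₁) (h₁w : WellDirected P₁)
    (h₂p : IsPeriodic P₂) (h₂w : WellDirected P₂) :
    IsPeriodic (RelComp P₁ P₂) ∧ WellDirected (RelComp P₁ P₂) := by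
  rw [wellDirected_iff_isWellDirected] at h₁w h₂w ⊢
  exact relComp_wellDirected_periodic_general P₁ P₂ h₁p h₁w h₂p h₂w
end

section
/- Let (A, ≤) be a partially ordered set of generalized transitions with endpoint maps into ℕ^d as described. For every nonempty run ρ = η₁…η_r, the transformer relation of ρ decomposes as P_ρ = P_{src(η₁)} ∘ P_{η₁} ∘ P_{src(η₂)} ∘ P_{η₂} ∘ … ∘ P_{src(η_r)} ∘ P_{η_r} ∘ P_{tgt(η_r)}, where ∘ denotes composition of relations on ℕ^d. -/
section Runs

variable {A : Type*} [PartialOrder A] {d : ℕ}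

/-- A run over a partially ordered set `A` of generalized transitions with endpoint
maps `src, tgt : A → ℕ^d`: either an empty run at some configuration (`steps = []`,
in which case `base` is that configuration), or a nonempty compatible sequence of
generalized transitions (`base` is then irrelevant). -/
structure Run (src tgt : A → NVec d) where
  steps : List A
  base : NVec d
  chain : steps.Chain' fun η η' => tgt η = src η'

variable {src tgt : A → NVec d}

/-- The source of a run. -/
def Run.source (ρ : Run src tgt) : NVec d :=
  match ρ.steps with
  | [] => ρ.base
  | η :: _ => src η

/-- The target of a run. -/
def Run.target (ρ : Run src tgt) : NVec d :=
  ρ.steps.getLast?.elim ρ.base tgt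

/-- The ordering on runs: sources and targets are componentwise ordered, and there is
a strictly increasing (Higman) embedding of the step sequences with `η_i ≤ η'_{f(i)}`. -/
def RunLE (ρ ρ' : Run src tgt) : Prop :=
  ρ.source ≤ ρ'.source ∧ ρ.target ≤ ρ'.target ∧
    ∃ f : Fin ρ.steps.length → Fin ρ'.steps.length, StrictMono f ∧
      ∀ i, ρ.steps.get i ≤ ρ'.steps.get (f i)

/-- The transformer relation of a generalized transition `η`:
`P_η = {(src η' − src η, tgt η' − tgt η) : η ≤ η'}`. -/
def transRel (src tgt : A → NVec d) (η : A) : Set (NVec d × NVec d) :=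
  {p | ∃ η' : A, η ≤ η' ∧ src η' = src η + p.1 ∧ tgt η' = tgt η + p.2}

/-- The transformer relation of a configuration `c`:
`P_c = {(x,y) : some run goes from c+x to c+y}`. -/
def confRel (src tgt : A → NVec d) (c : NVec d) : Set (NVec d × NVec d) :=
  {p | ∃ ρ : Run src tgt, ρ.source = c + p.1 ∧ ρ.target = c + p.2}

/-- The transformer relation of a run `ρ`:
`P_ρ = {(src ρ' − src ρ, tgt ρ' − tgt ρ) : ρ ≤ ρ'}`. -/
def runRel (ρ : Run src tgt) : Set (NVec d × NVec d) :=
  {p | ∃ ρ' : Run src tgt, RunLE ρ ρ' ∧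
    ρ'.source = ρ.source + p.1 ∧ ρ'.target = ρ.target + p.2}

/-- The alternating composition
`P_{src η₁} ∘ P_{η₁} ∘ P_{src η₂} ∘ P_{η₂} ∘ … ∘ P_{η_r} ∘ P_t`
along a list of generalized transitions, ending with the configuration `t`. -/
def decompRel (src tgt : A → NVec d) (t : NVec d) : List A → Set (NVec d × NVec d)
  | [] => confRel src tgt t
  | η :: l => RelComp (confRel src tgt (src η))
      (RelComp (transRel src tgt η) (decompRel src tgt t l))

/-! A run above `ρ = η₁ … η_r` uses, for each `i`, a transition `η'_i ≥ η_i`. Cutting it at these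
transitions leaves `r + 1` subruns; by monotonicity of the endpoint maps, the subrun before `η'_i`
ends at `src η_i + x` and the one after it starts at `tgt η_i + y` with `x, y ∈ ℕ^d`. So the subruns
witness the relations `P_c` and the `η'_i` the relations `P_{η_i}`; conversely, such witnesses
concatenate to a run above `ρ`. -/

section Embedding

variable {α β : Type*} {R : α → β → Prop}

theorem sublistForall₂_cons_left_iff {a : α} {l : List α} {l' : List β} :
    List.SublistForall₂ R (a :: l) l' ↔
      ∃ l₁ b l₂, l' = l₁ ++ b :: l₂ ∧ R a b ∧ List.SublistForall₂ R l l₂ := by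
  constructor
  · intro h
    induction l' with
    | nil => cases h
    | cons c l' ih =>
      cases h with
      | cons hac hl => exact ⟨[], c, l', rfl, hac, hl⟩
      | cons_right h =>
        obtain ⟨l₁, b, l₂, rfl, hab, hl⟩ := ih h
        exact ⟨c :: l₁, b, l₂, rfl, hab, hl⟩
  · rintro ⟨l₁, b, l₂, rfl, hab, hl⟩
    induction l₁ with
    | nil => exact .cons hab hl
    | cons c l₁ ih => exact .cons_right ih

theorem sublistForall₂_iff_exists_strictMono {l : List α} {l' : List β} :
    List.SublistForall₂ R l l' ↔
      ∃ f : Fin l.length → Fin l'.length, StrictMono f ∧ ∀ i, R (l.get i) (l'.get (f i)) := by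
  rw [List.sublistForall₂_iff]
  constructor
  · rintro ⟨m, hlm, hml'⟩
    obtain ⟨hlen, hR⟩ := List.forall₂_iff_get.1 hlm
    obtain ⟨f, hf⟩ := List.sublist_iff_exists_fin_orderEmbedding_get_eq.1 hml'
    refine ⟨f ∘ Fin.cast hlen, f.strictMono.comp (Fin.cast_strictMono hlen), fun i => ?_⟩
    rw [Function.comp_apply, ← hf]
    exact hR i i.2 (hlen ▸ i.2)
  · rintro ⟨f, hf, hR⟩
    have hlen : (List.ofFn (l'.get ∘ f)).length = l.length := List.length_ofFn
    refine ⟨List.ofFn (l'.get ∘ f), List.forall₂_iff_get.2 ⟨hlen.symm, fun i hi _ => ?_⟩,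
      List.sublist_iff_exists_fin_orderEmbedding_get_eq.2
        ⟨.ofStrictMono (f ∘ Fin.cast hlen) (hf.comp (Fin.cast_strictMono hlen)), fun i => ?_⟩⟩
    · simpa using hR ⟨i, hi⟩
    · exact List.get_ofFn _ i

end Embedding

section Path

variable {α V : Type*} {src tgt : α → V} {s t : V}

/-- `IsPath src tgt s l t` says that the transitions in `l` lead from `s` to `t`. Unlike a `Run`, a
path has its endpoints as parameters, so that the empty path needs no separate base point and
concatenation is plain `List` append. -/
def IsPath (src tgt : α → V) : V → List α → V → Prop
  | s, [], t => s = t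
  | s, η :: l, t => src η = s ∧ IsPath src tgt (tgt η) l t

theorem isPath_append {l₁ l₂ : List α} :
    IsPath src tgt s (l₁ ++ l₂) t ↔ ∃ m, IsPath src tgt s l₁ m ∧ IsPath src tgt m l₂ t := by
  induction l₁ generalizing s with
  | nil => simp [IsPath]
  | cons η l ih => simp [IsPath, ih, and_assoc]

theorem isPath_iff_isChain {l : List α} :
    IsPath src tgt s l t ↔ l.IsChain (fun η η' => tgt η = src η') ∧
      (∀ η ∈ l.head?, src η = s) ∧ l.getLast?.elim s tgt = t := by
  induction l generalizing s with
  | nil => simp [IsPath]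
  | cons η l ih =>
    have hlast : (η :: l).getLast?.elim s tgt = l.getLast?.elim (tgt η) tgt := by
      cases h : l.getLast? <;> simp [List.getLast?_cons, h]
    simp only [IsPath, ih, hlast, List.isChain_cons, List.head?_cons, Option.mem_some_iff,
      forall_eq', eq_comm (a := tgt η)]
    tauto

end Path

section Configuration

variable {α : Type*} {src tgt : α → NVec d}

theorem Run.isPath (ρ : Run src tgt) : IsPath src tgt ρ.source ρ.steps ρ.target := by
  obtain ⟨l, b, hl⟩ := ρ
  refine isPath_iff_isChain.2 ⟨hl, ?_⟩
  cases l <;> simp [Run.source, Run.target, List.getLast?_cons]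

theorem IsPath.exists_run {s t : NVec d} {l : List α} (h : IsPath src tgt s l t) :
    ∃ ρ : Run src tgt, ρ.steps = l ∧ ρ.source = s ∧ ρ.target = t := by
  obtain ⟨hchain, hhead, hlast⟩ := isPath_iff_isChain.1 h
  refine ⟨⟨l, s, hchain⟩, rfl, ?_, hlast⟩
  cases l with
  | nil => rfl
  | cons η l => exact hhead η rfl

theorem mem_confRel_iff_exists_isPath {c x y : NVec d} :
    (x, y) ∈ confRel src tgt c ↔ ∃ l, IsPath src tgt (c + x) l (c + y) := by
  constructor
  · rintro ⟨ρ, hsource, htarget⟩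
    exact ⟨ρ.steps, hsource ▸ htarget ▸ ρ.isPath⟩
  · rintro ⟨l, hl⟩
    obtain ⟨ρ, -, hsource, htarget⟩ := hl.exists_run
    exact ⟨ρ, hsource, htarget⟩

end Configuration

section Transformer

/-- The transformer relation of a path `l` from `s` to `t`: the analogue of `runRel` for paths. -/
def pathRel (src tgt : A → NVec d) (s : NVec d) (l : List A) (t : NVec d) :
    Set (NVec d × NVec d) :=
  {p | ∃ l', IsPath src tgt (s + p.1) l' (t + p.2) ∧ List.SublistForall₂ (· ≤ ·) l l'}

theorem runRel_eq_pathRel (ρ : Run src tgt) :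
    runRel ρ = pathRel src tgt ρ.source ρ.steps ρ.target := by
  ext ⟨x, y⟩
  constructor
  · rintro ⟨ρ', ⟨-, -, hembed⟩, hsource, htarget⟩
    exact ⟨ρ'.steps, hsource ▸ htarget ▸ ρ'.isPath, sublistForall₂_iff_exists_strictMono.2 hembed⟩
  · rintro ⟨l', hl', hembed⟩
    obtain ⟨ρ', rfl, hsource, htarget⟩ := hl'.exists_run
    exact ⟨ρ', ⟨le_self_add.trans_eq hsource.symm, le_self_add.trans_eq htarget.symm,
      sublistForall₂_iff_exists_strictMono.1 hembed⟩, hsource, htarget⟩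

theorem pathRel_nil (c : NVec d) : pathRel src tgt c [] c = confRel src tgt c := by
  ext ⟨x, y⟩
  rw [mem_confRel_iff_exists_isPath]
  exact exists_congr fun l => and_iff_left .nil

theorem pathRel_cons (hsrc : Monotone src) (htgt : Monotone tgt) (η : A) (l : List A)
    (t : NVec d) :
    pathRel src tgt (src η) (η :: l) t = RelComp (confRel src tgt (src η))
      (RelComp (transRel src tgt η) (pathRel src tgt (tgt η) l t)) := by
  ext ⟨x, y⟩
  constructor
  · rintro ⟨l', hl', hembed⟩
    obtain ⟨l₁, η', l₂, rfl, hη, hembed₂⟩ := sublistForall₂_cons_left_iff.1 hembed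
    obtain ⟨_, hl₁, rfl, hl₂⟩ := isPath_append.1 hl'
    obtain ⟨u, hu⟩ := exists_add_of_le (hsrc hη)
    obtain ⟨v, hv⟩ := exists_add_of_le (htgt hη)
    exact ⟨u, mem_confRel_iff_exists_isPath.2 ⟨l₁, hu ▸ hl₁⟩, v, ⟨η', hη, hu, hv⟩,
      l₂, hv ▸ hl₂, hembed₂⟩
  · rintro ⟨u, hconf, v, ⟨η', hη, hu, hv⟩, l₂, hl₂, hembed₂⟩
    obtain ⟨l₁, hl₁⟩ := mem_confRel_iff_exists_isPath.1 hconf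
    exact ⟨l₁ ++ η' :: l₂, isPath_append.2 ⟨_, hl₁, hu, hv ▸ hl₂⟩,
      sublistForall₂_cons_left_iff.2 ⟨l₁, η', l₂, rfl, hη, hembed₂⟩⟩

theorem IsPath.pathRel_eq_decompRel (hsrc : Monotone src) (htgt : Monotone tgt)
    {s t : NVec d} {l : List A} (h : IsPath src tgt s l t) :
    pathRel src tgt s l t = decompRel src tgt t l := by
  induction l generalizing s with
  | nil =>
    obtain rfl : s = t := h
    exact pathRel_nil s
  | cons η l ih =>
    obtain ⟨rfl, hl⟩ := h
    rw [pathRel_cons hsrc htgt, ih hl, decompRel]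

end Transformer

/-- Assume the endpoint maps are monotone with respect to the order
on generalized transitions. For every nonempty run `ρ = η₁ … η_r`, the transformer
relation of `ρ` decomposes as
`P_ρ = P_{src η₁} ∘ P_{η₁} ∘ P_{src η₂} ∘ P_{η₂} ∘ … ∘ P_{η_r} ∘ P_{tgt η_r}`. -/
theorem runRel_decomposition (src tgt : A → NVec d)
    (hmono : ∀ η η' : A, η ≤ η' → src η ≤ src η' ∧ tgt η ≤ tgt η')
    (ρ : Run src tgt) (hne : ρ.steps ≠ []) :
    runRel ρ = decompRel src tgt ρ.target ρ.steps := by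
  have hsrc : Monotone src := fun η η' hη => (hmono η η' hη).1
  have htgt : Monotone tgt := fun η η' hη => (hmono η η' hη).2
  rw [runRel_eq_pathRel, ρ.isPath.pathRel_eq_decompRel hsrc htgt]

end Runs
end
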